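/- Let n, m, Δ, Γ, k ∈ ℕ with Δ ≤ n and Γ ≤ m. Set (n₁, m₁) = (n−Δ, m), (n₂, m₂) = (n, m−Γ), and let 𝓡 = ℛ_{n−Δ,m} × ℛ_{n,m−Γ} ⊆ V. Let 𝐓 be a matrix differential operator whose components satisfy: T_{ab} = Σ_{i ≤ n_b, j ≤ m_b} M_{f^{ab}_{ij}} ∘ D_x^i ∘ D_y^j with all f^{ab}_{ij} = 0 for i + j > k, and suppose 𝐓 preserves 𝓡. Then 𝐓 is a ℂ-linear combination of compositions of elements of the generating set G = {S^+, S^−, S^0, T^+, T^−, T^0, J, K} ∪ {Q⁻_{αβ} : α ≤ Δ, β ≤ Γ} ∪ {Q⁺_{αβ} : α ≤ Δ, β ≤ Γ} ∪ {id}, each composition being a matrix differential operator of order at most k. -/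

import Mathlib

noncomputable section

open MvPolynomial

/-- The bivariate polynomial ring `R = ℂ[x,y]`. -/
abbrev R2 : Type := MvPolynomial (Fin 2) ℂ

/-- The variable `x`. -/
def Xv : R2 := X 0

/-- The variable `y`. -/
def Yv : R2 := X 1

/-- The partial derivative `∂_x` as a `ℂ`-linear endomorphism. -/
def Dx : Module.End ℂ R2 := (pderiv (0 : Fin 2)).toLinearMap

/-- The partial derivative `∂_y` as a `ℂ`-linear endomorphism. -/
def Dy : Module.End ℂ R2 := (pderiv (1 : Fin 2)).toLinearMap

/-- Multiplication by `f` as an endomorphism. -/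
def Mf (f : R2) : Module.End ℂ R2 := LinearMap.mulLeft ℂ f

/-- All compositions (products) of at most `k` elements of `S`; the empty
composition is the identity. -/
def prodsLE (k : ℕ) (S : Set (Module.End ℂ R2)) : Set (Module.End ℂ R2) :=
  {T | ∃ l : List (Module.End ℂ R2), l.length ≤ k ∧ (∀ a ∈ l, a ∈ S) ∧ l.prod = T}

/-- The rectangular module `ℛ_{n,m}`. -/
def Rmod (n m : ℕ) : Submodule ℂ R2 :=
  Submodule.span ℂ {P : R2 | ∃ i j : ℕ, i ≤ n ∧ j ≤ m ∧ P = Xv ^ i * Yv ^ j}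

/-- The triangular module `𝒯ₙ`. -/
def Tmod (n : ℕ) : Submodule ℂ R2 :=
  Submodule.span ℂ {P : R2 | ∃ i j : ℕ, i + j ≤ n ∧ P = Xv ^ i * Yv ^ j}

/-- The staircase module `𝒮^r_{p,q}`. -/
def Smod (r p q : ℕ) : Submodule ℂ R2 :=
  Submodule.span ℂ {P : R2 | ∃ i j : ℕ, i + r * j ≤ p ∧ j ≤ q ∧ P = Xv ^ i * Yv ^ j}

/-- An endomorphism has nonpositive `y`-degree if it maps each monomial `xᵃyᵇ`
into the span of the monomials `x^c y^e` with `e ≤ b`. -/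
def NonposY (T : Module.End ℂ R2) : Prop :=
  ∀ a b : ℕ, T (Xv ^ a * Yv ^ b) ∈
    Submodule.span ℂ {P : R2 | ∃ c e : ℕ, e ≤ b ∧ P = Xv ^ c * Yv ^ e}

/-- The rank-2 space `V = R × R`. -/
abbrev V2 : Type := R2 × R2

/-- The matrix operator `𝐓(u,v) = (A u + B v, C u + D v)`. -/
def matOp (A B C D : Module.End ℂ R2) : Module.End ℂ V2 :=
  LinearMap.prod
    (A ∘ₗ LinearMap.fst ℂ R2 R2 + B ∘ₗ LinearMap.snd ℂ R2 R2)
    (C ∘ₗ LinearMap.fst ℂ R2 R2 + D ∘ₗ LinearMap.snd ℂ R2 R2)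

/-- The diagonal matrix operator `diag(A, B)`. -/
def dg (A B : Module.End ℂ R2) : Module.End ℂ V2 := matOp A 0 0 B

/-- The scalar differential operator with coefficients `f` supported on `F`. -/
def diffOp (F : Finset (ℕ × ℕ)) (f : ℕ × ℕ → R2) : Module.End ℂ R2 :=
  ∑ ij ∈ F, Mf (f ij) * Dx ^ ij.1 * Dy ^ ij.2

/-- The index set `{(i,j) : i + j ≤ k}`. -/
def ordIdx (k : ℕ) : Finset (ℕ × ℕ) :=
  (Finset.range (k + 1) ×ˢ Finset.range (k + 1)).filter (fun ij => ij.1 + ij.2 ≤ k)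

/-- A scalar differential operator with polynomial coefficients, of order at most `k`. -/
def IsDiffOpLE (A : Module.End ℂ R2) (k : ℕ) : Prop :=
  ∃ f : ℕ × ℕ → R2, A = diffOp (ordIdx k) f

/-- A matrix differential operator of order at most `k`. -/
def IsMatDiffOpLE (P : Module.End ℂ V2) (k : ℕ) : Prop :=
  ∃ A B C D : Module.End ℂ R2, IsDiffOpLE A k ∧ IsDiffOpLE B k ∧ IsDiffOpLE C k ∧
    IsDiffOpLE D k ∧ P = matOp A B C D

/-- Compositions of elements of `S` which are matrix differential operators of
order at most `k`. -/
def matProdsOrd (k : ℕ) (S : Set (Module.End ℂ V2)) : Set (Module.End ℂ V2) :=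
  {P | ∃ l : List (Module.End ℂ V2), (∀ a ∈ l, a ∈ S) ∧ l.prod = P ∧ IsMatDiffOpLE P k}

/-- Compositions of at most `k` elements of `S`; the empty composition is the identity. -/
def matProdsLE (k : ℕ) (S : Set (Module.End ℂ V2)) : Set (Module.End ℂ V2) :=
  {P | ∃ l : List (Module.End ℂ V2), l.length ≤ k ∧ (∀ a ∈ l, a ∈ S) ∧ l.prod = P}

/-- `Jx⁺(a) = M_{x²}∘D_x − a·M_x`. -/
def Jxp (a : ℕ) : Module.End ℂ R2 := Mf (Xv ^ 2) * Dx - (a : ℂ) • Mf Xv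

/-- `Jx⁰(a) = M_x∘D_x − (a/2)·id`. -/
def Jx0 (a : ℕ) : Module.End ℂ R2 := Mf Xv * Dx - ((a : ℂ) / 2) • 1

/-- `Ky⁺(a) = M_{y²}∘D_y − a·M_y`. -/
def Kyp (a : ℕ) : Module.End ℂ R2 := Mf (Yv ^ 2) * Dy - (a : ℂ) • Mf Yv

/-- `Ky⁰(a) = M_y∘D_y − (a/2)·id`. -/
def Ky0 (a : ℕ) : Module.End ℂ R2 := Mf Yv * Dy - ((a : ℂ) / 2) • 1

def Sgp (n Δ : ℕ) : Module.End ℂ V2 := dg (Jxp (n - Δ)) (Jxp n)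
def Sgm : Module.End ℂ V2 := dg Dx Dx
def Sg0 (n Δ : ℕ) : Module.End ℂ V2 := dg (Jx0 (n - Δ)) (Jx0 n)
def Tgp (m Γ : ℕ) : Module.End ℂ V2 := dg (Kyp m) (Kyp (m - Γ))
def Tgm : Module.End ℂ V2 := dg Dy Dy
def Tg0 (m Γ : ℕ) : Module.End ℂ V2 := dg (Ky0 m) (Ky0 (m - Γ))
def Jgen (n Δ : ℕ) : Module.End ℂ V2 :=
  dg ((((n : ℂ) + (Δ : ℂ)) / 2) • 1) (((n : ℂ) / 2) • 1)
def Kgen (m Γ : ℕ) : Module.End ℂ V2 :=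
  dg (((m : ℂ) / 2) • 1) ((((m : ℂ) + (Γ : ℂ)) / 2) • 1)

/-- `q̄^y_β = (∏_{t=1}^{Γ−β}(M_y∘D_y − (m−Γ+t)·id)) ∘ D_y^β`. -/
def qbarY (m Γ β : ℕ) : Module.End ℂ R2 :=
  ((List.range (Γ - β)).map
    (fun t => Mf Yv * Dy - ((m - Γ + (t + 1) : ℕ) : ℂ) • 1)).prod * Dy ^ β

/-- `q̄^x_α = (∏_{t=1}^{Δ−α}(M_x∘D_x − (n−Δ+t)·id)) ∘ D_x^α`. -/
def qbarX (n Δ α : ℕ) : Module.End ℂ R2 :=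
  ((List.range (Δ - α)).map
    (fun t => Mf Xv * Dx - ((n - Δ + (t + 1) : ℕ) : ℂ) • 1)).prod * Dx ^ α

/-- `Q⁻_{αβ}(u,v) = (0, x^α·(q̄^y_β u))`. -/
def Qgm (m Γ α β : ℕ) : Module.End ℂ V2 := matOp 0 0 (Mf (Xv ^ α) * qbarY m Γ β) 0

/-- `Q⁺_{αβ}(u,v) = (q̄^x_α (y^β·v), 0)`. -/
def Qgp (n Δ α β : ℕ) : Module.End ℂ V2 := matOp 0 (qbarX n Δ α * Mf (Yv ^ β)) 0 0

/-- The generating set `G` for the rectangular rank-2 module. -/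
def Grect (n m Δ Γ : ℕ) : Set (Module.End ℂ V2) :=
  {Sgp n Δ, Sgm, Sg0 n Δ, Tgp m Γ, Tgm, Tg0 m Γ, Jgen n Δ, Kgen m Γ} ∪
  {P | ∃ α ≤ Δ, ∃ β ≤ Γ, P = Qgm m Γ α β} ∪
  {P | ∃ α ≤ Δ, ∃ β ≤ Γ, P = Qgp n Δ α β} ∪ {1}

/-- The rectangular index set `{(i,j) : i ≤ a, j ≤ b}`. -/
def rectIdx (a b : ℕ) : Finset (ℕ × ℕ) := Finset.range (a + 1) ×ˢ Finset.range (b + 1)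

/-!
The operators `x^s`, `∂_x^s` and the Euler operator act on the monomials `x^p` as shifts of the
exponent with polynomial weights. An operator of order `k` is thus a sum of shifts
`x^p y^q ↦ c(p, q) x^(p + s) y^(q + t)` with polynomials `c` of degree at most `k`. A monomial basis
vector sees the shifts separately, so each of them maps the first rectangle to the second, and `c`
vanishes on the vertical and horizontal lines whose points leave the second rectangle. As the degree
of `c` in each variable is bounded by the side of the first rectangle, `c` is divisible by the
equations of these lines. In each variable, the shift whose weight is the product of those equations
is a power of a nilpotent element of `sl₂` times one `q̄_α` or one power of the variable, and
the orders add up to the number of lines; the cofactor of `c` is a polynomial in the two Euler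
operators.
-/

section LinearFactor

variable {σ R : Type*} [CommRing R]

theorem X_sub_C_dvd_sub_bind₁_update [DecidableEq σ] (i : σ) (a : R) (f : MvPolynomial σ R) :
    X i - C a ∣ f - bind₁ (Function.update X i (C a)) f := by
  rw [← Ideal.mem_span_singleton, ← Ideal.Quotient.mk_eq_mk_iff_sub_mem]
  refine DFunLike.congr_fun (f := Ideal.Quotient.mkₐ R _)
    (g := (Ideal.Quotient.mkₐ R _).comp (bind₁ _)) (algHom_ext fun j => ?_) f
  obtain rfl | hj := eq_or_ne j i
  · simpa using Ideal.Quotient.eq.mpr (Ideal.mem_span_singleton_self (X j - C a))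
  · simp [hj]

theorem eval_bind₁_update [DecidableEq σ] (i : σ) (a : R) (x : σ → R) (f : MvPolynomial σ R) :
    eval x (bind₁ (Function.update X i (C a)) f) = eval (Function.update x i a) f := by
  refine (eval₂Hom_bind₁ (RingHom.id R) x _ f).trans (congrArg (eval · f) (funext fun j => ?_))
  obtain rfl | hj := eq_or_ne j i <;> simp [*]

theorem X_sub_C_dvd_iff [DecidableEq σ] {i : σ} {a : R} {f : MvPolynomial σ R} :
    X i - C a ∣ f ↔ bind₁ (Function.update X i (C a)) f = 0 := by
  refine ⟨?_, fun h => by simpa [h] using X_sub_C_dvd_sub_bind₁_update i a f⟩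
  rintro ⟨g, rfl⟩
  simp [algHom_C]

theorem X_sub_C_dvd_X_sub_C_iff [Nontrivial R] {i j : σ} {a b : R} :
    (X i - C a : MvPolynomial σ R) ∣ X j - C b ↔ i = j ∧ a = b := by
  classical
  rw [X_sub_C_dvd_iff]
  obtain rfl | hj := eq_or_ne j i
  · simp [algHom_C, sub_eq_zero]
  · refine iff_of_false (fun h => ?_) (by simp [hj.symm])
    simpa [algHom_C, hj] using congr(eval (fun _ => b + 1) $h)

theorem prime_X_sub_C [IsDomain R] (i : σ) (a : R) :
    Prime (X i - C a : MvPolynomial σ R) := by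
  classical
  refine ⟨fun h => ?_, fun h => ?_, fun f g h => ?_⟩
  · simpa using congr(eval (fun _ => a + 1) $h)
  · simpa using h.map (eval fun _ => a)
  · simpa only [X_sub_C_dvd_iff, map_mul, mul_eq_zero] using h

theorem degreeOf_X_sub_C [DecidableEq σ] [Nontrivial R] (i j : σ) (a : R) :
    degreeOf i (X j - C a : MvPolynomial σ R) = if i = j then 1 else 0 := by
  refine le_antisymm (by simpa [degreeOf_X] using degreeOf_sub_le i (X j) (C a)) ?_
  split_ifs with h
  · subst h
    have hmem : Finsupp.single i 1 ∈ (X i - C a).support := by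
      simp [coeff_C, eq_comm (a := (0 : σ →₀ ℕ))]
    simpa using le_degreeOf_of_mem_support i hmem
  · simp

theorem totalDegree_X_sub_C [Nontrivial R] (i : σ) (a : R) :
    totalDegree (X i - C a : MvPolynomial σ R) = 1 := by
  classical
  refine le_antisymm ((totalDegree_sub_C_le _ a).trans_eq (totalDegree_X i)) ?_
  exact ((degreeOf_X_sub_C i i a).trans (if_pos rfl)).ge.trans (degreeOf_le_totalDegree _ i)

theorem degreeOf_bind₁_update_le [DecidableEq σ] (i j : σ) (a : R) (f : MvPolynomial σ R) :
    degreeOf j (bind₁ (Function.update X i (C a)) f) ≤ degreeOf j f := by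
  cases subsingleton_or_nontrivial R
  · simp [Subsingleton.elim f 0]
  have hvar (l : σ) :
      degreeOf j (Function.update X i (C a) l : MvPolynomial σ R) ≤ if l = j then 1 else 0 := by
    obtain rfl | hl := eq_or_ne l i
    · simp
    · simp [hl, degreeOf_X, eq_comm]
  conv_lhs => rw [f.as_sum, map_sum]
  refine (degreeOf_sum_le j _ _).trans (Finset.sup_le fun d hd => ?_)
  rw [bind₁_monomial]
  calc _ ≤ ∑ l ∈ d.support, degreeOf j ((Function.update X i (C a) l : MvPolynomial σ R) ^ d l) :=
        (degreeOf_C_mul_le _ _ _).trans (degreeOf_prod_le _ _ _)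
    _ ≤ ∑ l ∈ d.support, if l = j then d l else 0 := by
        gcongr with l
        refine (degreeOf_pow_le _ _ _).trans ((Nat.mul_le_mul_left _ (hvar l)).trans_eq (by simp))
    _ ≤ d j := by simp only [Finset.sum_ite_eq']; split_ifs <;> simp
    _ ≤ degreeOf j f := le_degreeOf_of_mem_support j hd

theorem X_sub_C_dvd_of_eval_eq_zero [Finite σ] [IsDomain R] {f : MvPolynomial σ R}
    {S : σ → Finset R}
    (hS : ∀ j, degreeOf j f < (S j).card) {i : σ} {a : R}
    (hf : ∀ x : σ → R, x i = a → (∀ j ≠ i, x j ∈ S j) → eval x f = 0) :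
    X i - C a ∣ f := by
  classical
  rw [X_sub_C_dvd_iff]
  refine eq_zero_of_eval_zero_at_prod_finset _ S
    (fun j => (degreeOf_bind₁_update_le i j a f).trans_lt (hS j)) fun x hx => ?_
  rw [eval_bind₁_update]
  exact hf _ (by simp) fun j hj => by simpa [hj] using hx j

end LinearFactor

section GridPolynomial

theorem totalDegree_prod_of_isDomain {σ R ι : Type*} [CommRing R] [IsDomain R] (s : Finset ι)
    (f : ι → MvPolynomial σ R) (h : ∀ i ∈ s, f i ≠ 0) :
    totalDegree (∏ i ∈ s, f i) = ∑ i ∈ s, totalDegree (f i) := by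
  classical
  induction s using Finset.induction_on with
  | empty => simp
  | insert a s ha ih =>
    rw [Finset.forall_mem_insert] at h
    rw [Finset.prod_insert ha, Finset.sum_insert ha, ← ih h.2,
      totalDegree_mul_of_isDomain h.1 (Finset.prod_ne_zero_iff.mpr h.2)]

variable {σ R K : Type*} [Fintype σ] [CommRing R] [Field K]

/-- The product of the factors `X i - z` with `z ∈ Z i`: it vanishes on the hyperplanes
`x i = z` and has the least degree among the polynomials that do. -/
def gridPoly (Z : σ → Finset R) : MvPolynomial σ R :=
  ∏ p ∈ Finset.univ.sigma Z, (X p.1 - C p.2)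

theorem eval_gridPoly (Z : σ → Finset R) (x : σ → R) :
    eval x (gridPoly Z) = ∏ i, ∏ z ∈ Z i, (x i - z) := by
  simp [gridPoly, Finset.prod_sigma]

theorem gridPoly_ne_zero [IsDomain R] (Z : σ → Finset R) : gridPoly Z ≠ 0 :=
  Finset.prod_ne_zero_iff.mpr fun p _ => (prime_X_sub_C p.1 p.2).ne_zero

theorem degreeOf_gridPoly [IsDomain R] (Z : σ → Finset R) (i : σ) :
    degreeOf i (gridPoly Z) = (Z i).card := by
  classical
  rw [gridPoly, degreeOf_prod_eq _ _ fun p _ => (prime_X_sub_C p.1 p.2).ne_zero]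
  simp only [degreeOf_X_sub_C, Finset.sum_sigma]
  simp [apply_ite Finset.card]

theorem totalDegree_gridPoly [IsDomain R] (Z : σ → Finset R) :
    totalDegree (gridPoly Z) = ∑ i, (Z i).card := by
  rw [gridPoly, totalDegree_prod_of_isDomain _ _ fun p _ => (prime_X_sub_C p.1 p.2).ne_zero]
  simp only [totalDegree_X_sub_C, Finset.sum_sigma, Finset.card_eq_sum_ones]

theorem gridPoly_dvd_of_eval_eq_zero {f : MvPolynomial σ K} {S Z : σ → Finset K}
    (hS : ∀ j, degreeOf j f < (S j).card)
    (hf : ∀ x : σ → K, ∀ i, x i ∈ Z i → (∀ j ≠ i, x j ∈ S j) → eval x f = 0) :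
    gridPoly Z ∣ f := by
  refine Finset.prod_dvd_of_isRelPrime (fun p _ q _ hpq => ?_) fun p hp => ?_
  · rw [Function.onFun, (prime_X_sub_C p.1 p.2).irreducible.isRelPrime_iff_not_dvd,
      X_sub_C_dvd_X_sub_C_iff]
    exact fun h => hpq (Sigma.ext h.1 (heq_of_eq h.2))
  · refine X_sub_C_dvd_of_eval_eq_zero hS fun x hx => hf x p.1 ?_
    simpa [hx] using hp

end GridPolynomial

section Ladder

variable {R E ι : Type*} [CommRing R] [AddCommGroup E] [Module R E]

/-- `M` and `D` act on each sequence `v a` as `x` and `∂_x` act on the powers of `x`. -/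
structure IsWeylLadder (M D : Module.End R E) (v : ι → ℕ → E) : Prop where
  mul_apply (a : ι) (p : ℕ) : M (v a p) = v a (p + 1)
  deriv_apply (a : ι) (p : ℕ) : D (v a p) = (p : R) • v a (p - 1)

/-- `A` shifts each sequence `v a` by `s`, with a weight that is the monic polynomial with simple
roots `Z`. The terms that would be moved to a negative index are killed. -/
structure IsShift (v : ι → ℕ → E) (A : Module.End R E) (s : ℤ) (Z : Finset ℤ) : Prop where
  mem_zeros (p : ℕ) : p + s < 0 → (p : ℤ) ∈ Z
  apply (a : ι) (p : ℕ) : A (v a p) = (∏ z ∈ Z, ((p : R) - z)) • v a (p + s).toNat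

theorem IsShift.mul {v : ι → ℕ → E} {A B : Module.End R E} {s t : ℤ} {Z Z' W : Finset ℤ}
    (hA : IsShift v A s Z) (hB : IsShift v B t Z')
    (hW : ∀ z, z ∈ W ↔ z ∈ Z' ∨ z + t ∈ Z) (hdisj : ∀ z ∈ Z', z + t ∉ Z) :
    IsShift v (A * B) (s + t) W := by
  have hmem (z : ℤ) : z ∈ Z.map (addRightEmbedding (-t)) ↔ z + t ∈ Z := by
    simp [← sub_eq_add_neg, sub_eq_iff_eq_add]
  have hdisj' : Disjoint Z' (Z.map (addRightEmbedding (-t))) := by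
    simpa only [Finset.disjoint_left, hmem] using hdisj
  have hprod (p : R) : ∏ z ∈ W, (p - z) = (∏ z ∈ Z', (p - z)) * ∏ z ∈ Z, (p + t - z) := by
    obtain rfl : W = Z'.disjUnion _ hdisj' := by
      ext z
      rw [hW, Finset.mem_disjUnion, hmem]
    rw [Finset.prod_disjUnion, Finset.prod_map]
    refine congrArg _ (Finset.prod_congr rfl fun z _ => ?_)
    simp only [addRightEmbedding_apply, Int.cast_add, Int.cast_neg]
    ring
  refine ⟨fun p hp => ?_, fun a p => ?_⟩
  · by_cases hpt : (p : ℤ) + t < 0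
    · exact (hW _).mpr (.inl (hB.mem_zeros p hpt))
    · have hmem := hA.mem_zeros (p + t).toNat (by lia)
      rw [Int.toNat_of_nonneg (not_lt.mp hpt)] at hmem
      exact (hW _).mpr (.inr hmem)
  · rw [Module.End.mul_apply, hB.apply, map_smul, hA.apply, smul_smul, hprod]
    by_cases hpt : (p : ℤ) + t < 0
    · have hzero : ∏ z ∈ Z', ((p : R) - z) = 0 := Finset.prod_eq_zero (hB.mem_zeros p hpt) (by simp)
      simp only [hzero, zero_mul, zero_smul]
    · have hcast : ((p + t).toNat : ℤ) = p + t := Int.toNat_of_nonneg (not_lt.mp hpt)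
      have hcast' : (((p + t).toNat : ℕ) : R) = p + t := by
        simpa only [Int.cast_natCast, Int.cast_add] using congrArg (Int.cast (R := R)) hcast
      rw [hcast, hcast', add_assoc, add_comm s]

theorem isShift_one (v : ι → ℕ → E) : IsShift v (1 : Module.End R E) 0 ∅ := by
  constructor <;> simp

/-- The raising operator `x²∂ - a x` of the `sl₂`-action on polynomials of degree at most `a`. -/
def raisingOp (M D : Module.End R E) (a : ℕ) : Module.End R E := M ^ 2 * D - (a : R) • M

/-- The operators `q̄_α` of the paper, `0 ≤ α ≤ r`, which map polynomials of degree at most `N + r`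
to polynomials of degree at most `N`. -/
def qbar (M D : Module.End R E) (N r α : ℕ) : Module.End R E :=
  ((List.range (r - α)).map fun t => M * D - ((N + (t + 1) : ℕ) : R) • 1).prod * D ^ α

namespace IsWeylLadder

variable {M D : Module.End R E} {v : ι → ℕ → E}

theorem isShift_mul (h : IsWeylLadder M D v) : IsShift v M 1 ∅ where
  mem_zeros p hp := by lia
  apply a p := by simpa using h.mul_apply a p

theorem isShift_deriv (h : IsWeylLadder M D v) : IsShift v D (-1) {0} where
  mem_zeros p hp := by rw [Finset.mem_singleton]; lia
  apply a p := by simpa [← sub_eq_add_neg] using h.deriv_apply a p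

theorem isShift_mul_pow (h : IsWeylLadder M D v) (e : ℕ) : IsShift v (M ^ e) e ∅ := by
  induction e with
  | zero => exact isShift_one v
  | succ e ih => exact ih.mul h.isShift_mul (by simp) (by simp)

theorem isShift_deriv_pow (h : IsWeylLadder M D v) (e : ℕ) : IsShift v (D ^ e) (-e) (.Ico 0 e) := by
  induction e with
  | zero => exact isShift_one v
  | succ e ih =>
    rw [Nat.cast_succ, neg_add]
    exact ih.mul h.isShift_deriv (by grind) (by simp)

theorem euler_apply (h : IsWeylLadder M D v) (a : ι) (p : ℕ) :
    (M * D) (v a p) = (p : R) • v a p := by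
  cases p <;> simp [h.mul_apply, h.deriv_apply]

theorem euler_pow_apply (h : IsWeylLadder M D v) (i : ℕ) (a : ι) (p : ℕ) :
    ((M * D) ^ i) (v a p) = (p : R) ^ i • v a p := by
  induction i with
  | zero => simp
  | succ i ih =>
    rw [pow_succ, Module.End.mul_apply, h.euler_apply, map_smul, ih, smul_smul, pow_succ']

theorem isShift_raisingOp (h : IsWeylLadder M D v) (N : ℕ) :
    IsShift v (raisingOp M D N) 1 {(N : ℤ)} where
  mem_zeros p hp := by lia
  apply a p := by
    rw [show ((p : ℤ) + 1).toNat = p + 1 by simp]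
    cases p <;> simp [raisingOp, pow_succ, h.mul_apply, h.deriv_apply, sub_smul]

theorem isShift_raisingOp_pow (h : IsWeylLadder M D v) (N e : ℕ) :
    IsShift v (raisingOp M D N ^ e) e (.Ioc (N - e) N) := by
  induction e with
  | zero => simpa using isShift_one v
  | succ e ih =>
    rw [Nat.cast_succ]
    exact ih.mul (h.isShift_raisingOp N) (by grind) (by simp)

theorem isShift_euler_sub (h : IsWeylLadder M D v) (c : ℕ) :
    IsShift v (M * D - (c : R) • 1) 0 {(c : ℤ)} where
  mem_zeros p hp := by lia
  apply a p := by simp [h.euler_apply, sub_smul, -Module.End.mul_apply]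

theorem isShift_euler_sub_prod (h : IsWeylLadder M D v) (N n : ℕ) :
    IsShift v ((List.range n).map fun t => M * D - ((N + (t + 1) : ℕ) : R) • 1).prod 0
      (.Ioc N (N + n)) := by
  induction n with
  | zero => simpa using isShift_one v
  | succ n ih =>
    rw [List.range_succ, List.map_append, List.prod_append, List.map_singleton, List.prod_singleton]
    exact ih.mul (h.isShift_euler_sub _) (by grind) (by simp)

theorem isShift_qbar (h : IsWeylLadder M D v) {N r α : ℕ} (hα : α ≤ r) :
    IsShift v (qbar M D N r α) (-α) (.Ico 0 α ∪ .Ioc (N + α) (N + r)) := by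
  rw [← zero_add (-(α : ℤ))]
  exact (h.isShift_euler_sub_prod N (r - α)).mul (h.isShift_deriv_pow α) (by grind) (by grind)

end IsWeylLadder

/-- The degrees `p ≤ N` for which `p + s` is not the exponent of a monomial of degree at most
`N'`: a shift by `s` that maps degree at most `N` to degree at most `N'` has to vanish there. -/
def forcedZeros (N N' : ℕ) (s : ℤ) : Finset ℤ := .Icc 0 N \ .Icc (-s) (N' - s)

theorem mem_forcedZeros {N N' : ℕ} {s z : ℤ} :
    z ∈ forcedZeros N N' s ↔ (0 ≤ z ∧ z ≤ N) ∧ ¬(0 ≤ z + s ∧ z + s ≤ N') := by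
  grind [forcedZeros]

theorem neg_le_and_le_of_card_forcedZeros_le {N N' : ℕ} {s : ℤ}
    (hs : (forcedZeros N N' s).card ≤ N) : -(N : ℤ) ≤ s ∧ s ≤ N' := by
  by_contra hcon
  have hall : forcedZeros N N' s = .Icc 0 (N : ℤ) := by
    grind [mem_forcedZeros]
  simp [hall] at hs

/-- `P` is the `e`-th power of one of the two nilpotent elements `∂` and `x²∂ - N x` of `sl₂`. -/
def IsNilpotentPow (M D : Module.End R E) (N e : ℕ) (P : Module.End R E) : Prop :=
  P = D ^ e ∨ P = raisingOp M D N ^ e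

/-- Every shift with the weight forced by mapping degree at most `N` to degree at most `N'` is the
product of an element of `𝒜` with a power of a nilpotent element of `sl₂`. Here `r` is the order
of the elements of `𝒜`, so that the orders of the two factors add up to that of the product. -/
def HasShiftFactorization (M D : Module.End R E) (v : ι → ℕ → E) (N N' r : ℕ)
    (𝒜 : Set (Module.End R E)) : Prop :=
  ∀ s : ℤ, (forcedZeros N N' s).card ≤ N → ∃ e P, ∃ A ∈ 𝒜, e + r = (forcedZeros N N' s).card ∧
    IsNilpotentPow M D N' e P ∧ IsShift v (P * A) s (forcedZeros N N' s)

namespace IsWeylLadder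

variable {M D : Module.End R E} {v : ι → ℕ → E}

theorem hasShiftFactorization_mul_pow (h : IsWeylLadder M D v) (N r : ℕ) :
    HasShiftFactorization M D v N (N + r) 0 ((M ^ ·) '' .Iic r) := by
  intro s hs
  obtain ⟨hsN, hsN'⟩ := neg_le_and_le_of_card_forcedZeros_le hs
  clear hs
  obtain ⟨e, rfl⟩ | ⟨α, hα, rfl⟩ | ⟨e, rfl⟩ :
      (∃ e : ℕ, s = -e) ∨ (∃ α ≤ r, s = (α : ℕ)) ∨ (∃ e : ℕ, s = e + r) := by
    by_cases hs0 : s ≤ 0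
    · exact .inl ⟨s.natAbs, by lia⟩
    by_cases hsr : s ≤ r
    · exact .inr (.inl ⟨s.natAbs, by lia⟩)
    · exact .inr (.inr ⟨(s - r).natAbs, by lia⟩)
  · have hZ : forcedZeros N (N + r) (-e) = .Ico 0 (e : ℤ) := by
      grind [mem_forcedZeros]
    refine ⟨e, D ^ e, _, ⟨0, Set.mem_Iic.mpr zero_le, rfl⟩, by simp [hZ], .inl rfl, ?_⟩
    simpa [hZ] using h.isShift_deriv_pow e
  · have hZ : forcedZeros N (N + r) α = ∅ := by
      grind [mem_forcedZeros]
    refine ⟨0, 1, _, ⟨α, hα, rfl⟩, by simp [hZ], .inl (pow_zero D).symm, ?_⟩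
    simpa [hZ] using h.isShift_mul_pow α
  · have hZ : forcedZeros N (N + r) (e + r) = .Ioc ((N : ℤ) - e) N := by
      grind [mem_forcedZeros]
    refine ⟨e, _, _, ⟨r, Set.self_mem_Iic, rfl⟩, by simp [hZ], .inr rfl, ?_⟩
    rw [hZ]
    exact (h.isShift_raisingOp_pow (N + r) e).mul (h.isShift_mul_pow r) (by grind) (by simp)

theorem hasShiftFactorization_qbar (h : IsWeylLadder M D v) (N r : ℕ) :
    HasShiftFactorization M D v (N + r) N r (qbar M D N r '' .Iic r) := by
  intro s hs
  obtain ⟨hsN, hsN'⟩ := neg_le_and_le_of_card_forcedZeros_le hs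
  clear hs
  obtain ⟨e, rfl⟩ | ⟨α, hα, rfl⟩ | ⟨e, rfl⟩ :
      (∃ e : ℕ, s = -e - r) ∨ (∃ α ≤ r, s = -(α : ℕ)) ∨ (∃ e : ℕ, s = e) := by
    by_cases hsr : s < -r
    · exact .inl ⟨(s + r).natAbs, by lia⟩
    by_cases hs0 : s ≤ 0
    · exact .inr (.inl ⟨s.natAbs, by lia⟩)
    · exact .inr (.inr ⟨s.natAbs, by lia⟩)
  · have hZ : forcedZeros (N + r) N (-e - r) = .Ico 0 ((e : ℤ) + r) := by
      grind [mem_forcedZeros]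
    refine ⟨e, D ^ e, _, ⟨r, Set.self_mem_Iic, rfl⟩, by grind [Int.card_Ico], .inl rfl, ?_⟩
    exact (h.isShift_deriv_pow e).mul (h.isShift_qbar le_rfl) (by grind) (by grind)
  · have hZ : forcedZeros (N + r) N (-α) = .Ico 0 (α : ℤ) ∪ .Ioc (N + α : ℤ) (N + r) := by
      grind [mem_forcedZeros]
    refine ⟨0, 1, _, ⟨α, hα, rfl⟩, ?_, .inl (pow_zero D).symm, ?_⟩
    · rw [hZ, Finset.card_union_of_disjoint (Finset.disjoint_left.mpr (by grind))]
      simp only [Int.card_Ico, Int.card_Ioc]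
      lia
    · simpa [hZ] using h.isShift_qbar hα
  · have hZ : forcedZeros (N + r) N e = .Ioc ((N : ℤ) - e) (N + r) := by
      grind [mem_forcedZeros]
    refine ⟨e, _, _, ⟨0, Set.mem_Iic.mpr zero_le, rfl⟩, by grind [Int.card_Ioc], .inr rfl, ?_⟩
    rw [← add_zero (e : ℤ)]
    exact (h.isShift_raisingOp_pow N e).mul (h.isShift_qbar zero_le) (by grind) (by grind)

end IsWeylLadder
end Ladder

section Commutation

theorem Mf_eq_lmul (f : R2) : Mf f = Algebra.lmul ℂ R2 f := rfl

theorem Mf_mul (f g : R2) : Mf (f * g) = Mf f * Mf g := by simp only [Mf_eq_lmul, map_mul]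

theorem Mf_pow (f : R2) (e : ℕ) : Mf (f ^ e) = Mf f ^ e := by simp only [Mf_eq_lmul, map_pow]

theorem Mf_one : Mf 1 = 1 := by simp only [Mf_eq_lmul, map_one]

theorem deriv_mul_Mf (d : Derivation ℂ R2 R2) (f : R2) :
    d.toLinearMap * Mf f = Mf f * d.toLinearMap + Mf (d f) := by
  refine LinearMap.ext fun g => ?_
  simp [Mf, mul_comm]

theorem Dx_mul_Mf (f : R2) : Dx * Mf f = Mf f * Dx + Mf (Dx f) := deriv_mul_Mf _ f

theorem Dy_mul_Mf (f : R2) : Dy * Mf f = Mf f * Dy + Mf (Dy f) := deriv_mul_Mf _ f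

theorem commute_Mf (f g : R2) : Commute (Mf f) (Mf g) := by
  rw [commute_iff_eq, ← Mf_mul, mul_comm, Mf_mul]

theorem commute_Dx_Mf_Yv : Commute Dx (Mf Yv) := by
  rw [commute_iff_eq, Dx_mul_Mf]
  simp [Dx, Yv, Mf_eq_lmul]

theorem commute_Dy_Mf_Xv : Commute Dy (Mf Xv) := by
  rw [commute_iff_eq, Dy_mul_Mf]
  simp [Dy, Xv, Mf_eq_lmul]

end Commutation

section Monomials

/-- The monomial `x^p y^q`. -/
def mon (p q : ℕ) : R2 := Xv ^ p * Yv ^ q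

theorem mon_eq_monomial (p q : ℕ) :
    mon p q = monomial (Finsupp.single 0 p + Finsupp.single 1 q) 1 := by
  simp [mon, Xv, Yv, X_pow_eq_monomial, monomial_mul]

theorem monomial_eq_mon (d : Fin 2 →₀ ℕ) : monomial d (1 : ℂ) = mon (d 0) (d 1) := by
  rw [mon_eq_monomial]
  congr
  ext i
  fin_cases i <;> simp

theorem coeff_mon (d : Fin 2 →₀ ℕ) (p q : ℕ) :
    coeff d (mon p q) = if p = d 0 ∧ q = d 1 then 1 else 0 := by
  rw [mon_eq_monomial, coeff_monomial]
  congr 1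
  simp [Finsupp.ext_iff, Fin.forall_fin_two]

theorem end_ext {A B : Module.End ℂ R2} (h : ∀ p q, A (mon p q) = B (mon p q)) : A = B :=
  (basisMonomials (Fin 2) ℂ).ext fun d => by simpa [monomial_eq_mon] using h (d 0) (d 1)

theorem isWeylLadder_x : IsWeylLadder (Mf Xv) Dx fun q p => mon p q where
  mul_apply q p := by simp only [Mf, mon, LinearMap.mulLeft_apply, pow_succ']; ring
  deriv_apply q p := by simp [Dx, mon, Xv, Yv, smul_eq_C_mul, mul_comm, mul_assoc]

theorem isWeylLadder_y : IsWeylLadder (Mf Yv) Dy mon where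
  mul_apply p q := by simp only [Mf, mon, LinearMap.mulLeft_apply, pow_succ']; ring
  deriv_apply p q := by simp [Dy, mon, Xv, Yv, smul_eq_C_mul, mul_left_comm]

theorem commute_Dx_Dy : Commute Dx Dy := end_ext fun p q => by
  simp only [Module.End.mul_apply, isWeylLadder_x.deriv_apply, isWeylLadder_y.deriv_apply,
    map_smul, smul_comm (p : ℂ)]

theorem coeff_eq_zero_of_mem_Rmod {N M : ℕ} {f : R2} (hf : f ∈ Rmod N M) {d : Fin 2 →₀ ℕ}
    (hd : ¬(d 0 ≤ N ∧ d 1 ≤ M)) : coeff d f = 0 := by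
  suffices h : Rmod N M ≤ LinearMap.ker (lcoeff ℂ d) from h hf
  refine Submodule.span_le.mpr ?_
  rintro _ ⟨i, j, hi, hj, rfl⟩
  refine (coeff_mon d i j).trans (if_neg ?_)
  rintro ⟨rfl, rfl⟩
  exact hd ⟨hi, hj⟩

end Monomials

section ShiftOperators

/-- The operator `x^p y^q ↦ c(p, q) x^(p + s) y^(q + t)`. It is the component of bidegree `(s, t)`
of a differential operator only if `c(p, q) = 0` whenever an exponent on the right is negative. -/
def shiftOp (s t : ℤ) : R2 →ₗ[ℂ] Module.End ℂ R2 where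
  toFun c := (basisMonomials (Fin 2) ℂ).constr ℂ fun d =>
    eval (fun i => (d i : ℂ)) c • mon (d 0 + s).toNat (d 1 + t).toNat
  map_add' c c' := (basisMonomials (Fin 2) ℂ).ext fun d => by
    simp only [Module.Basis.constr_basis, LinearMap.add_apply, map_add, add_smul]
  map_smul' a c := (basisMonomials (Fin 2) ℂ).ext fun d => by
    simp only [Module.Basis.constr_basis, LinearMap.smul_apply, smul_eval, mul_smul,
      RingHom.id_apply]

theorem shiftOp_mon (s t : ℤ) (c : R2) (p q : ℕ) :
    shiftOp s t c (mon p q) = eval ![(p : ℂ), (q : ℂ)] c • mon (p + s).toNat (q + t).toNat := by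
  have hx : (fun i => ((Finsupp.single 0 p + Finsupp.single 1 q : Fin 2 →₀ ℕ) i : ℂ)) =
      ![↑p, ↑q] := by
    ext i
    fin_cases i <;> simp
  rw [mon_eq_monomial, ← hx]
  refine ((basisMonomials (Fin 2) ℂ).constr_basis ℂ _
    (Finsupp.single 0 p + Finsupp.single 1 q)).trans ?_
  simp

/-- The least polynomial that vanishes on the lines `x = z`, `z ∈ Z`, and `y = z`, `z ∈ Z'`. -/
def boxPoly (Z Z' : Finset ℤ) : R2 :=
  gridPoly ![Z.image Int.cast, Z'.image Int.cast]

theorem eval_boxPoly (Z Z' : Finset ℤ) (p q : ℂ) :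
    eval ![p, q] (boxPoly Z Z') = (∏ z ∈ Z, (p - z)) * ∏ z ∈ Z', (q - z) := by
  simp [boxPoly, eval_gridPoly, Finset.prod_image Int.cast_injective.injOn]

theorem mul_mul_euler_pow_eq_shiftOp {A B : Module.End ℂ R2} {s t : ℤ} {Z Z' : Finset ℤ}
    (hA : IsShift (fun q p => mon p q) A s Z) (hB : IsShift mon B t Z') (d : Fin 2 →₀ ℕ) :
    A * B * ((Mf Xv * Dx) ^ d 0 * (Mf Yv * Dy) ^ d 1) =
      shiftOp s t (boxPoly Z Z' * monomial d 1) := end_ext fun p q => by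
  simp only [Module.End.mul_apply, isWeylLadder_y.euler_pow_apply, isWeylLadder_x.euler_pow_apply,
    hB.apply, hA.apply, map_smul, smul_smul, shiftOp_mon, map_mul, eval_boxPoly, eval_monomial]
  simp only [Finsupp.prod_fintype, pow_zero, implies_true, Fin.prod_univ_two, Matrix.cons_val_zero,
    Matrix.cons_val_one, one_mul]
  congr 1
  ring

end ShiftOperators

section Symbols

/-- The weights `c` for which `shiftOp s t c` is a differential operator of order at most `k`, and
of order at most `N` in `x` and at most `M` in `y`. -/
def symbols (N M k : ℕ) (s t : ℤ) : Submodule ℂ R2 :=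
  restrictSupport ℂ {d | d 0 ≤ N ∧ d 1 ≤ M ∧ d 0 + d 1 ≤ k} ⊓
    ⨅ (p : ℕ) (q : ℕ) (_ : p + s < 0 ∨ q + t < 0), LinearMap.ker (aeval ![(p : ℂ), q]).toLinearMap

variable {N M N' M' k : ℕ} {s t : ℤ}

theorem mem_symbols {c : R2} :
    c ∈ symbols N M k s t ↔ degreeOf 0 c ≤ N ∧ degreeOf 1 c ≤ M ∧ c.totalDegree ≤ k ∧
      ∀ p q : ℕ, p + s < 0 ∨ q + t < 0 → eval ![(p : ℂ), q] c = 0 := by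
  have htotal : c.totalDegree ≤ k ↔ ∀ d ∈ c.support, d 0 + d 1 ≤ k := by
    simp [totalDegree, Finsupp.sum_fintype]
  simp only [symbols, Submodule.mem_inf, mem_restrictSupport_iff, htotal, degreeOf_le_iff,
    Submodule.mem_iInf, LinearMap.mem_ker, AlgHom.toLinearMap_apply, aeval_eq_eval]
  exact ⟨fun h => ⟨fun d hd => (h.1 hd).1, fun d hd => (h.1 hd).2.1, fun d hd => (h.1 hd).2.2, h.2⟩,
    fun h => ⟨fun d hd => ⟨h.1 d hd, h.2.1 d hd, h.2.2.1 d hd⟩, h.2.2.2⟩⟩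

theorem degreeOf_boxPoly (Z Z' : Finset ℤ) (i : Fin 2) :
    degreeOf i (boxPoly Z Z') = ![Z.card, Z'.card] i := by
  rw [boxPoly, degreeOf_gridPoly]
  fin_cases i <;> exact Finset.card_image_of_injective _ Int.cast_injective

theorem totalDegree_boxPoly (Z Z' : Finset ℤ) :
    (boxPoly Z Z').totalDegree = Z.card + Z'.card := by
  simp [boxPoly, totalDegree_gridPoly, Finset.card_image_of_injective _ Int.cast_injective]

theorem boxPoly_ne_zero (Z Z' : Finset ℤ) : boxPoly Z Z' ≠ 0 := gridPoly_ne_zero _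

theorem boxPoly_mem_symbols {Z Z' : Finset ℤ} (hZ : Z.card ≤ N) (hZ' : Z'.card ≤ M)
    (hk : Z.card + Z'.card ≤ k) (hs : ∀ p : ℕ, p + s < 0 → (p : ℤ) ∈ Z)
    (ht : ∀ q : ℕ, q + t < 0 → (q : ℤ) ∈ Z') : boxPoly Z Z' ∈ symbols N M k s t := by
  refine mem_symbols.mpr ⟨?_, ?_, ?_, fun p q hpq => ?_⟩
  · simpa [degreeOf_boxPoly] using hZ
  · simpa [degreeOf_boxPoly] using hZ'
  · simpa [totalDegree_boxPoly] using hk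
  · rw [eval_boxPoly, mul_eq_zero]
    exact hpq.imp (fun hp => Finset.prod_eq_zero (hs p hp) (by simp))
      fun hq => Finset.prod_eq_zero (ht q hq) (by simp)

theorem Mf_mon_mul_eq_shiftOp (a b i j : ℕ) :
    Mf (mon a b) * Dx ^ i * Dy ^ j =
      shiftOp (a - i) (b - j) (boxPoly (.Ico 0 i) (.Ico 0 j)) := by
  have hx := (isWeylLadder_x.isShift_mul_pow a).mul (isWeylLadder_x.isShift_deriv_pow i)
    (W := .Ico 0 i) (by simp) (by simp)
  have hy := (isWeylLadder_y.isShift_mul_pow b).mul (isWeylLadder_y.isShift_deriv_pow j)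
    (W := .Ico 0 j) (by simp) (by simp)
  have hcomm : Mf Yv ^ b * Dx ^ i = Dx ^ i * Mf Yv ^ b :=
    (commute_Dx_Mf_Yv.symm.pow_pow b i).eq
  rw [mon, Mf_mul, Mf_pow, Mf_pow, mul_assoc (Mf Xv ^ a), hcomm]
  simpa [mul_assoc, sub_eq_add_neg] using
    mul_mul_euler_pow_eq_shiftOp hx hy 0

theorem Mf_mul_deriv_pow_mem_iSup {i j : ℕ} (hi : i ≤ N) (hj : j ≤ M) (hk : i + j ≤ k) (f : R2) :
    Mf f * Dx ^ i * Dy ^ j ∈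
      ⨆ st : ℤ × ℤ, (symbols N M k st.1 st.2).map (shiftOp st.1 st.2) := by
  induction f using MvPolynomial.induction_on' with
  | monomial d a =>
    have hmon : Mf (monomial d a) = a • Mf (mon (d 0) (d 1)) := by
      rw [← monomial_eq_mon, Mf_eq_lmul, Mf_eq_lmul, ← map_smul, smul_monomial, smul_eq_mul,
        mul_one]
    rw [hmon, smul_mul_assoc, smul_mul_assoc, Mf_mon_mul_eq_shiftOp]
    refine Submodule.smul_mem _ _ (Submodule.mem_iSup_of_mem (_, _) (Submodule.mem_map_of_mem ?_))
    apply boxPoly_mem_symbols <;> grind [Int.card_Ico]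
  | add f g hf hg =>
    rw [Mf_eq_lmul, map_add, add_mul, add_mul]
    exact add_mem hf hg

theorem exists_diffOp_eq_sum_shiftOp {f : ℕ × ℕ → R2} (hf : ∀ ij, k < ij.1 + ij.2 → f ij = 0) :
    ∃ (I : Finset (ℤ × ℤ)) (c : ℤ × ℤ → R2), (∀ st, c st ∈ symbols N M k st.1 st.2) ∧
      diffOp (rectIdx N M) f = ∑ st ∈ I, shiftOp st.1 st.2 (c st) := by
  have hmem : diffOp (rectIdx N M) f ∈
      ⨆ st : ℤ × ℤ, (symbols N M k st.1 st.2).map (shiftOp st.1 st.2) := by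
    refine sum_mem fun ij hij => ?_
    rw [rectIdx, Finset.mem_product, Finset.mem_range_succ_iff, Finset.mem_range_succ_iff] at hij
    by_cases hk : k < ij.1 + ij.2
    · simp [hf ij hk, Mf_eq_lmul]
    · exact Mf_mul_deriv_pow_mem_iSup hij.1 hij.2 (not_lt.mp hk) _
  obtain ⟨T, hT, hsum⟩ := (Submodule.mem_iSup_iff_exists_finsupp _ _).mp hmem
  choose c hc hcT using hT
  exact ⟨T.support, c, hc, by simp only [hcT, ← hsum, Finsupp.sum]⟩

theorem coeff_sum_shiftOp_mon {I : Finset (ℤ × ℤ)} {c : ℤ × ℤ → R2}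
    (hc : ∀ st, c st ∈ symbols N M k st.1 st.2) (hst : (s, t) ∈ I) {p q : ℕ} {d : Fin 2 →₀ ℕ}
    (hp : (d 0 : ℤ) = p + s) (hq : (d 1 : ℤ) = q + t) :
    coeff d ((∑ st ∈ I, shiftOp st.1 st.2 (c st)) (mon p q)) = eval ![(p : ℂ), q] (c (s, t)) := by
  rw [LinearMap.sum_apply, coeff_sum, Finset.sum_eq_single (s, t) _ (absurd hst)]
  · rw [shiftOp_mon, coeff_smul, coeff_mon, if_pos (by lia), smul_eq_mul, mul_one]
  rintro ⟨s', t'⟩ - hne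
  rw [shiftOp_mon, coeff_smul, coeff_mon]
  by_cases hneg : p + s' < 0 ∨ q + t' < 0
  · rw [(mem_symbols.mp (hc (s', t'))).2.2.2 p q hneg, zero_smul]
  · rw [if_neg (by grind), smul_zero]

theorem eval_eq_zero_of_mem_forcedZeros {I : Finset (ℤ × ℤ)} {c : ℤ × ℤ → R2}
    (hc : ∀ st, c st ∈ symbols N M k st.1 st.2)
    (hpres : ∀ w ∈ Rmod N M, (∑ st ∈ I, shiftOp st.1 st.2 (c st)) w ∈ Rmod N' M')
    (hst : (s, t) ∈ I) {p q : ℤ} (hp : p ∈ Finset.Icc 0 (N : ℤ)) (hq : q ∈ Finset.Icc 0 (M : ℤ))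
    (hpq : p ∈ forcedZeros N N' s ∨ q ∈ forcedZeros M M' t) :
    eval ![(p : ℂ), q] (c (s, t)) = 0 := by
  simp only [mem_forcedZeros, Finset.mem_Icc] at hp hq hpq
  lift p to ℕ using hp.1
  lift q to ℕ using hq.1
  simp only [Int.cast_natCast]
  by_cases hneg : p + s < 0 ∨ q + t < 0
  · exact (mem_symbols.mp (hc (s, t))).2.2.2 p q hneg
  have hw : mon p q ∈ Rmod N M := Submodule.subset_span ⟨p, q, by lia, by lia, rfl⟩
  let d : Fin 2 →₀ ℕ := Finsupp.equivFunOnFinite.symm ![(p + s).toNat, (q + t).toNat]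
  have hd0 : (d 0 : ℤ) = p + s := Int.toNat_of_nonneg (by lia)
  have hd1 : (d 1 : ℤ) = q + t := Int.toNat_of_nonneg (by lia)
  rw [← coeff_sum_shiftOp_mon hc hst hd0 hd1]
  exact coeff_eq_zero_of_mem_Rmod (hpres _ hw) (by lia)

theorem boxPoly_forcedZeros_dvd {I : Finset (ℤ × ℤ)} {c : ℤ × ℤ → R2}
    (hc : ∀ st, c st ∈ symbols N M k st.1 st.2)
    (hpres : ∀ w ∈ Rmod N M, (∑ st ∈ I, shiftOp st.1 st.2 (c st)) w ∈ Rmod N' M')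
    (hst : (s, t) ∈ I) :
    boxPoly (forcedZeros N N' s) (forcedZeros M M' t) ∣ c (s, t) := by
  obtain ⟨hN, hM, -⟩ := mem_symbols.mp (hc (s, t))
  have hIcc {n n' : ℕ} {r z : ℤ} (hz : z ∈ forcedZeros n n' r) : z ∈ Finset.Icc 0 (n : ℤ) :=
    (Finset.mem_sdiff.mp hz).1
  refine gridPoly_dvd_of_eval_eq_zero
    (S := ![(Finset.Icc 0 (N : ℤ)).image Int.cast, (Finset.Icc 0 (M : ℤ)).image Int.cast])
    (Fin.forall_fin_two.mpr ⟨?_, ?_⟩)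
    fun x => Fin.forall_fin_two.mpr ⟨fun hp hq => ?_, fun hq hp => ?_⟩
  · simpa [Finset.card_image_of_injective _ (Int.cast_injective (α := ℂ)), Nat.lt_succ_iff]
  · simpa [Finset.card_image_of_injective _ (Int.cast_injective (α := ℂ)), Nat.lt_succ_iff]
  · obtain ⟨p, hp, hpx⟩ := Finset.mem_image.mp hp
    obtain ⟨q, hq, hqx⟩ := Finset.mem_image.mp (hq 1 (by simp))
    rw [show x = ![(p : ℂ), q] by ext i; fin_cases i; exacts [hpx.symm, hqx.symm]]
    exact eval_eq_zero_of_mem_forcedZeros hc hpres hst (hIcc hp) hq (.inl hp)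
  · obtain ⟨q, hq, hqx⟩ := Finset.mem_image.mp hq
    obtain ⟨p, hp, hpx⟩ := Finset.mem_image.mp (hp 0 (by simp))
    rw [show x = ![(p : ℂ), q] by ext i; fin_cases i; exacts [hpx.symm, hqx.symm]]
    exact eval_eq_zero_of_mem_forcedZeros hc hpres hst hp (hIcc hq) (.inr hq)

theorem card_add_le_of_boxPoly_mul_mem_symbols {Z Z' : Finset ℤ} {h : R2}
    (hc : boxPoly Z Z' * h ∈ symbols N M k s t) {d : Fin 2 →₀ ℕ} (hd : d ∈ h.support) :
    Z.card + d 0 ≤ N ∧ Z'.card + d 1 ≤ M ∧ Z.card + Z'.card + (d 0 + d 1) ≤ k := by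
  have hh : h ≠ 0 := by
    rintro rfl
    simp at hd
  obtain ⟨h0, h1, hk, -⟩ := mem_symbols.mp hc
  rw [degreeOf_mul_eq (boxPoly_ne_zero Z Z') hh, degreeOf_boxPoly] at h0 h1
  rw [totalDegree_mul_of_isDomain (boxPoly_ne_zero Z Z') hh, totalDegree_boxPoly] at hk
  have hd0 := monomial_le_degreeOf 0 hd
  have hd1 := monomial_le_degreeOf 1 hd
  have hdk := le_totalDegree hd
  rw [Finsupp.sum_fintype _ _ fun _ => rfl, Fin.sum_univ_two] at hdk
  simp only [Matrix.cons_val_zero, Matrix.cons_val_one] at h0 h1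
  lia

theorem diffOp_mem_span_of_preserves {f : ℕ × ℕ → R2} (hf : ∀ ij, k < ij.1 + ij.2 → f ij = 0)
    (hpres : ∀ w ∈ Rmod N M, diffOp (rectIdx N M) f w ∈ Rmod N' M') :
    diffOp (rectIdx N M) f ∈ Submodule.span ℂ
      {T | ∃ (s t : ℤ) (d : Fin 2 →₀ ℕ), (forcedZeros N N' s).card + d 0 ≤ N ∧
        (forcedZeros M M' t).card + d 1 ≤ M ∧
        (forcedZeros N N' s).card + (forcedZeros M M' t).card + (d 0 + d 1) ≤ k ∧
        T = shiftOp s t (boxPoly (forcedZeros N N' s) (forcedZeros M M' t) * monomial d 1)} := by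
  obtain ⟨I, c, hc, hsum⟩ := exists_diffOp_eq_sum_shiftOp (N := N) (M := M) hf
  rw [hsum] at hpres ⊢
  refine sum_mem fun ⟨s, t⟩ hst => ?_
  have hcst := hc (s, t)
  obtain ⟨h, hh⟩ := boxPoly_forcedZeros_dvd hc hpres hst
  rw [hh] at hcst ⊢
  rw [h.as_sum, Finset.mul_sum, map_sum]
  refine sum_mem fun d hd => ?_
  obtain ⟨h0, h1, h2⟩ := card_add_le_of_boxPoly_mul_mem_symbols hcst hd
  have hmon : monomial d (coeff d h) = coeff d h • monomial d (1 : ℂ) := by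
    rw [smul_monomial, smul_eq_mul, mul_one]
  rw [hmon, mul_smul_comm, map_smul]
  exact Submodule.smul_mem _ _ (Submodule.subset_span ⟨s, t, d, h0, h1, h2, rfl⟩)

end Symbols

section OrderFiltration

/-- The differential operators of order at most `k`, as a submodule. -/
def diffOpsLE (k : ℕ) : Submodule ℂ (Module.End ℂ R2) :=
  Submodule.span ℂ {A | ∃ f i j, i + j ≤ k ∧ A = Mf f * Dx ^ i * Dy ^ j}

theorem isDiffOpLE_iff {A : Module.End ℂ R2} {k : ℕ} : IsDiffOpLE A k ↔ A ∈ diffOpsLE k := by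
  refine ⟨?_, fun hA => ?_⟩
  · rintro ⟨f, rfl⟩
    exact sum_mem fun ij hij =>
      Submodule.subset_span ⟨f ij, ij.1, ij.2, (Finset.mem_filter.mp hij).2, rfl⟩
  · induction hA using Submodule.span_induction with
    | mem A hA =>
      obtain ⟨f, i, j, hij, rfl⟩ := hA
      refine ⟨Pi.single (i, j) f, ?_⟩
      have hmem : (i, j) ∈ ordIdx k := by
        simp only [ordIdx, Finset.mem_filter, Finset.mem_product, Finset.mem_range]
        lia
      rw [diffOp, Finset.sum_eq_single_of_mem (i, j) hmem, Pi.single_eq_same]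
      intro ij _ hne
      simp [Pi.single_eq_of_ne hne, Mf_eq_lmul]
    | zero => exact ⟨0, by simp [diffOp, Mf_eq_lmul]⟩
    | add A B _ _ hA hB =>
      obtain ⟨f, rfl⟩ := hA
      obtain ⟨g, rfl⟩ := hB
      exact ⟨f + g, by simp [diffOp, Mf_eq_lmul, add_mul, Finset.sum_add_distrib]⟩
    | smul a A _ hA =>
      obtain ⟨f, rfl⟩ := hA
      exact ⟨a • f, by simp [diffOp, Mf_eq_lmul, Finset.smul_sum]⟩

theorem diffOpsLE_mono : Monotone diffOpsLE := fun a b hab => Submodule.span_mono <| by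
  rintro _ ⟨f, i, j, hij, rfl⟩
  exact ⟨f, i, j, hij.trans hab, rfl⟩

theorem Mf_mem_diffOpsLE (f : R2) : Mf f ∈ diffOpsLE 0 :=
  Submodule.subset_span ⟨f, 0, 0, le_rfl, by simp⟩

theorem Dx_mem_diffOpsLE : Dx ∈ diffOpsLE 1 :=
  Submodule.subset_span ⟨1, 1, 0, le_rfl, by simp [Mf_one]⟩

theorem Dy_mem_diffOpsLE : Dy ∈ diffOpsLE 1 :=
  Submodule.subset_span ⟨1, 0, 1, le_rfl, by simp [Mf_one]⟩

variable {k : ℕ} {B : Module.End ℂ R2}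

theorem Mf_mul_mem_diffOpsLE (f : R2) (hB : B ∈ diffOpsLE k) : Mf f * B ∈ diffOpsLE k := by
  suffices h : diffOpsLE k ≤ (diffOpsLE k).comap (LinearMap.mulLeft ℂ (Mf f)) from h hB
  refine Submodule.span_le.mpr ?_
  rintro _ ⟨g, i, j, hij, rfl⟩
  exact Submodule.subset_span ⟨f * g, i, j, hij, by simp [Mf_mul, mul_assoc]⟩

theorem Dx_mul_mem_diffOpsLE (hB : B ∈ diffOpsLE k) : Dx * B ∈ diffOpsLE (k + 1) := by
  suffices h : diffOpsLE k ≤ (diffOpsLE (k + 1)).comap (LinearMap.mulLeft ℂ Dx) from h hB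
  refine Submodule.span_le.mpr ?_
  rintro _ ⟨g, i, j, hij, rfl⟩
  have hleibniz : Dx * (Mf g * Dx ^ i * Dy ^ j) =
      Mf g * Dx ^ (i + 1) * Dy ^ j + Mf (Dx g) * Dx ^ i * Dy ^ j := by
    simp only [← mul_assoc, Dx_mul_Mf, add_mul, pow_succ']
  rw [SetLike.mem_coe, Submodule.mem_comap, LinearMap.mulLeft_apply, hleibniz]
  exact add_mem
    (Submodule.subset_span ⟨g, i + 1, j, by lia, rfl⟩)
    (Submodule.subset_span ⟨Dx g, i, j, by lia, rfl⟩)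

theorem Dy_mul_mem_diffOpsLE (hB : B ∈ diffOpsLE k) : Dy * B ∈ diffOpsLE (k + 1) := by
  suffices h : diffOpsLE k ≤ (diffOpsLE (k + 1)).comap (LinearMap.mulLeft ℂ Dy) from h hB
  refine Submodule.span_le.mpr ?_
  rintro _ ⟨g, i, j, hij, rfl⟩
  have hleibniz : Dy * (Mf g * Dx ^ i * Dy ^ j) =
      Mf g * Dx ^ i * Dy ^ (j + 1) + Mf (Dy g) * Dx ^ i * Dy ^ j := by
    have hcomm : Dy * Dx ^ i = Dx ^ i * Dy := (commute_Dx_Dy.symm.pow_right i).eq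
    rw [pow_succ' Dy, ← mul_assoc, ← mul_assoc, Dy_mul_Mf, add_mul, add_mul, mul_assoc (Mf g),
      hcomm]
    simp only [mul_assoc]
  rw [SetLike.mem_coe, Submodule.mem_comap, LinearMap.mulLeft_apply, hleibniz]
  exact add_mem
    (Submodule.subset_span ⟨g, i, j + 1, by lia, rfl⟩)
    (Submodule.subset_span ⟨Dy g, i, j, by lia, rfl⟩)

theorem mul_mem_diffOpsLE {a b : ℕ} {A B : Module.End ℂ R2} (hA : A ∈ diffOpsLE a)
    (hB : B ∈ diffOpsLE b) : A * B ∈ diffOpsLE (a + b) := by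
  suffices h : diffOpsLE a ≤ (diffOpsLE (a + b)).comap (LinearMap.mulRight ℂ B) from h hA
  refine Submodule.span_le.mpr ?_
  rintro _ ⟨f, i, j, hij, rfl⟩
  have hDy (j : ℕ) : Dy ^ j * B ∈ diffOpsLE (j + b) := by
    induction j with
    | zero => simpa using hB
    | succ j ih =>
      rw [pow_succ', mul_assoc, Nat.add_right_comm]
      exact Dy_mul_mem_diffOpsLE ih
  have hDx (i : ℕ) : Dx ^ i * (Dy ^ j * B) ∈ diffOpsLE (i + (j + b)) := by
    induction i with
    | zero => simpa using hDy j
    | succ i ih =>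
      rw [pow_succ', mul_assoc, Nat.add_right_comm]
      exact Dx_mul_mem_diffOpsLE ih
  have hle : i + (j + b) ≤ a + b := by lia
  simpa [mul_assoc] using Mf_mul_mem_diffOpsLE f (diffOpsLE_mono hle (hDx i))

instance gradedMonoid_diffOpsLE : SetLike.GradedMonoid diffOpsLE where
  one_mem := Mf_one ▸ Mf_mem_diffOpsLE 1
  mul_mem _ _ _ _ := mul_mem_diffOpsLE

theorem mul_sub_smul_mem_diffOpsLE {M D C : Module.End ℂ R2} (hM : M ∈ diffOpsLE 0)
    (hD : D ∈ diffOpsLE 1) (hC : C ∈ diffOpsLE 0) (a : ℂ) : M * D - a • C ∈ diffOpsLE 1 :=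
  sub_mem (by simpa using mul_mem_diffOpsLE hM hD)
    (Submodule.smul_mem _ a (diffOpsLE_mono zero_le_one hC))

variable {M D : Module.End ℂ R2}

theorem raisingOp_mem_diffOpsLE (hM : M ∈ diffOpsLE 0) (hD : D ∈ diffOpsLE 1) (a : ℕ) :
    raisingOp M D a ∈ diffOpsLE 1 :=
  mul_sub_smul_mem_diffOpsLE (by simpa using SetLike.pow_mem_graded 2 hM) hD hM a

theorem qbar_mem_diffOpsLE (hM : M ∈ diffOpsLE 0) (hD : D ∈ diffOpsLE 1) (N : ℕ) {r α : ℕ}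
    (hα : α ≤ r) : qbar M D N r α ∈ diffOpsLE r := by
  have hprod := SetLike.list_prod_map_mem_graded (A := diffOpsLE) (List.range (r - α)) (fun _ => 1)
    (fun t => M * D - ((N + (t + 1) : ℕ) : ℂ) • 1)
    fun _ _ => mul_sub_smul_mem_diffOpsLE hM hD (SetLike.one_mem_graded _) _
  have hpow := SetLike.pow_mem_graded α hD
  simpa [qbar, Nat.sub_add_cancel hα] using mul_mem_diffOpsLE hprod hpow

end OrderFiltration

section MatrixOperators

/-- The identification of `2 × 2` matrices of operators on `R` with operators on `V = R × R`. -/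
def matOpHom : Matrix (Fin 2) (Fin 2) (Module.End ℂ R2) →ₐ[ℂ] Module.End ℂ V2 :=
  AlgHom.ofLinearMap
    { toFun A := matOp (A 0 0) (A 0 1) (A 1 0) (A 1 1)
      map_add' A B := by ext w <;> simp [matOp]
      map_smul' a A := by ext w <;> simp [matOp] }
    (by ext w <;> simp [matOp])
    fun A B => by ext w <;> simp [matOp, Matrix.mul_apply, Fin.sum_univ_two]

theorem matOpHom_diagonal (d : Fin 2 → Module.End ℂ R2) :
    matOpHom (.diagonal d) = dg (d 0) (d 1) := rfl

theorem isMatDiffOpLE_iff {P : Module.End ℂ V2} {k : ℕ} :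
    IsMatDiffOpLE P k ↔ ∃ A, (∀ a b, A a b ∈ diffOpsLE k) ∧ matOpHom A = P := by
  simp only [IsMatDiffOpLE, isDiffOpLE_iff, Fin.forall_fin_two]
  constructor
  · rintro ⟨A, B, C, D, hA, hB, hC, hD, rfl⟩
    exact ⟨!![A, B; C, D], ⟨⟨hA, hB⟩, hC, hD⟩, rfl⟩
  · rintro ⟨A, ⟨⟨hA, hB⟩, hC, hD⟩, rfl⟩
    exact ⟨_, _, _, _, hA, hB, hC, hD, rfl⟩

theorem IsMatDiffOpLE.mono {P : Module.End ℂ V2} {k l : ℕ} (hkl : k ≤ l)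
    (hP : IsMatDiffOpLE P k) : IsMatDiffOpLE P l := by
  rw [isMatDiffOpLE_iff] at hP ⊢
  obtain ⟨A, hA, rfl⟩ := hP
  exact ⟨A, fun a b => diffOpsLE_mono hkl (hA a b), rfl⟩

theorem IsMatDiffOpLE.mul {P Q : Module.End ℂ V2} {k l : ℕ} (hP : IsMatDiffOpLE P k)
    (hQ : IsMatDiffOpLE Q l) : IsMatDiffOpLE (P * Q) (k + l) := by
  rw [isMatDiffOpLE_iff] at hP hQ ⊢
  obtain ⟨A, hA, rfl⟩ := hP
  obtain ⟨B, hB, rfl⟩ := hQ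
  refine ⟨A * B, fun a b => ?_, map_mul ..⟩
  rw [Matrix.mul_apply]
  exact sum_mem fun c _ => mul_mem_diffOpsLE (hA a c) (hB c b)

/-- The linear combinations of those compositions of elements of `G` that are matrix differential
operators of order at most `k`. -/
def orderSpan (G : Set (Module.End ℂ V2)) (k : ℕ) : Submodule ℂ (Module.End ℂ V2) :=
  Submodule.span ℂ (matProdsOrd k G)

variable {G : Set (Module.End ℂ V2)} {k l : ℕ}

theorem orderSpan_mono : Monotone (orderSpan G) := fun k l hkl => Submodule.span_mono <| by
  rintro _ ⟨L, hL, rfl, hP⟩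
  exact ⟨L, hL, rfl, hP.mono hkl⟩

theorem mul_mem_orderSpan {P Q : Module.End ℂ V2} (hP : P ∈ orderSpan G k)
    (hQ : Q ∈ orderSpan G l) : P * Q ∈ orderSpan G (k + l) := by
  have hPQ := Submodule.mul_mem_mul hP hQ
  rw [orderSpan, orderSpan, Submodule.span_mul_span] at hPQ
  refine Submodule.span_mono ?_ hPQ
  rintro _ ⟨_, ⟨L, hL, rfl, hP⟩, _, ⟨L', hL', rfl, hQ⟩, rfl⟩
  exact ⟨L ++ L', List.forall_mem_append.mpr ⟨hL, hL'⟩, List.prod_append, hP.mul hQ⟩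

theorem matOpHom_mem_orderSpan {A : Matrix (Fin 2) (Fin 2) (Module.End ℂ R2)}
    (hG : matOpHom A ∈ G) (hA : ∀ a b, A a b ∈ diffOpsLE k) : matOpHom A ∈ orderSpan G k :=
  Submodule.subset_span
    ⟨[matOpHom A], by simpa using hG, List.prod_singleton, isMatDiffOpLE_iff.mpr ⟨A, hA, rfl⟩⟩

/-- The operators which, as the `(a, b)` entry of a matrix with no other nonzero entry, are
generated by `G` with order at most `k`. -/
def blockSpan (G : Set (Module.End ℂ V2)) (a b : Fin 2) (k : ℕ) :
    Submodule ℂ (Module.End ℂ R2) :=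
  (orderSpan G k).comap (matOpHom.toLinearMap ∘ₗ Matrix.singleLinearMap ℂ a b)

variable {a b c : Fin 2}

theorem mem_blockSpan {A : Module.End ℂ R2} :
    A ∈ blockSpan G a b k ↔ matOpHom (.single a b A) ∈ orderSpan G k := Iff.rfl

theorem matOpHom_mem_orderSpan_of_mem_blockSpan {A : Matrix (Fin 2) (Fin 2) (Module.End ℂ R2)}
    (hA : ∀ a b, A a b ∈ blockSpan G a b k) : matOpHom A ∈ orderSpan G k := by
  rw [Matrix.matrix_eq_sum_single A]
  simp only [map_sum]
  exact sum_mem fun a _ => sum_mem fun b _ => hA a b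

theorem blockSpan_mono : Monotone (blockSpan G a b) :=
  fun _ _ hkl => Submodule.comap_mono (orderSpan_mono hkl)

theorem mul_mem_blockSpan {A B : Module.End ℂ R2} (hA : A ∈ blockSpan G a b k)
    (hB : B ∈ blockSpan G b c l) : A * B ∈ blockSpan G a c (k + l) := by
  simpa only [mem_blockSpan, ← map_mul, Matrix.single_mul_single_same] using
    mul_mem_orderSpan (mem_blockSpan.mp hA) (mem_blockSpan.mp hB)

theorem pow_mem_blockSpan {A : Module.End ℂ R2} (h1 : 1 ∈ blockSpan G a a 0)
    (hA : A ∈ blockSpan G a a 1) (e : ℕ) : A ^ e ∈ blockSpan G a a e := by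
  induction e with
  | zero => simpa using h1
  | succ e ih => exact pow_succ A e ▸ mul_mem_blockSpan ih hA

theorem diagonal_mem_diffOpsLE {d : Fin 2 → Module.End ℂ R2} (hd : ∀ a, d a ∈ diffOpsLE k)
    (a b : Fin 2) : Matrix.diagonal d a b ∈ diffOpsLE k := by
  rw [Matrix.diagonal_apply]
  split_ifs
  exacts [hd a, zero_mem _]

theorem single_mem_diffOpsLE {A : Module.End ℂ R2} (hA : A ∈ diffOpsLE k) (a b c d : Fin 2) :
    Matrix.single a b A c d ∈ diffOpsLE k := by
  rw [Matrix.single_apply]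
  split_ifs
  exacts [hA, zero_mem _]

theorem mem_blockSpan_of_single_mem {A : Module.End ℂ R2} (hG : matOpHom (.single a b A) ∈ G)
    (hA : A ∈ diffOpsLE k) : A ∈ blockSpan G a b k :=
  matOpHom_mem_orderSpan hG (single_mem_diffOpsLE hA a b)

theorem mem_blockSpan_of_diagonal_mem {d : Fin 2 → Module.End ℂ R2}
    (h1 : 1 ∈ blockSpan G a a 0) (hG : matOpHom (.diagonal d) ∈ G) (hd : ∀ a, d a ∈ diffOpsLE k) :
    d a ∈ blockSpan G a a k := by
  have hmul : Matrix.single a a 1 * Matrix.diagonal d = Matrix.single a a (d a) := by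
    ext i j : 2
    simp only [Matrix.mul_diagonal, Matrix.single_apply, ite_mul, one_mul, zero_mul]
    grind
  simpa only [mem_blockSpan, zero_add, ← map_mul, hmul] using
    mul_mem_orderSpan (mem_blockSpan.mp h1) (matOpHom_mem_orderSpan hG (diagonal_mem_diffOpsLE hd))

theorem one_mem_blockSpan_of_diagonal_mem (hG1 : 1 ∈ G) {r : Fin 2 → ℂ} (hr : r 0 ≠ r 1)
    (hG : matOpHom (.diagonal fun a => r a • 1) ∈ G) (a : Fin 2) : 1 ∈ blockSpan G a a 0 := by
  have hmem1 : 1 ∈ orderSpan G 0 := by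
    rw [← map_one matOpHom, ← Matrix.diagonal_one] at hG1 ⊢
    exact matOpHom_mem_orderSpan hG1 (diagonal_mem_diffOpsLE fun _ => SetLike.one_mem_graded _)
  have hmem := matOpHom_mem_orderSpan (k := 0) hG
    (diagonal_mem_diffOpsLE fun a => Submodule.smul_mem _ (r a) (SetLike.one_mem_graded _))
  have hne : r a - r a.rev ≠ 0 := by
    rw [sub_ne_zero]
    fin_cases a
    exacts [hr, hr.symm]
  have hproj : (Matrix.single a a 1 : Matrix (Fin 2) (Fin 2) (Module.End ℂ R2)) =
      (r a - r a.rev)⁻¹ • (Matrix.diagonal (fun i => r i • 1) - r a.rev • 1) := by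
    rw [eq_inv_smul_iff₀ hne]
    ext i j : 2
    fin_cases a <;> fin_cases i <;> fin_cases j <;> simp [sub_smul]
  rw [mem_blockSpan, hproj, map_smul, map_sub, map_smul, map_one]
  exact Submodule.smul_mem _ _ (sub_mem hmem (Submodule.smul_mem _ _ hmem1))

/-- Up to order one, the `a`-th diagonal block of the span of the compositions of `G` contains the
action of `gl₂` by differential operators on the polynomials of degree at most `N`. -/
structure ContainsGl2 (G : Set (Module.End ℂ V2)) (a : Fin 2) (M D : Module.End ℂ R2) (N : ℕ) :
    Prop where
  one_mem : 1 ∈ blockSpan G a a 0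
  lowering_mem : D ∈ blockSpan G a a 1
  euler_mem : M * D ∈ blockSpan G a a 1
  raising_mem : raisingOp M D N ∈ blockSpan G a a 1

variable {M D : Module.End ℂ R2}

theorem containsGl2_of_diagonal_mem (hM : M ∈ diffOpsLE 0) (hD : D ∈ diffOpsLE 1) {N : Fin 2 → ℕ}
    (hone : 1 ∈ blockSpan G a a 0) (hlowering : matOpHom (.diagonal fun _ => D) ∈ G)
    (heuler : matOpHom (.diagonal fun a => M * D - ((N a : ℂ) / 2) • 1) ∈ G)
    (hraising : matOpHom (.diagonal fun a => raisingOp M D (N a)) ∈ G) :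
    ContainsGl2 G a M D (N a) := by
  refine ⟨hone, mem_blockSpan_of_diagonal_mem (d := fun _ => D) hone hlowering fun _ => hD, ?_,
    mem_blockSpan_of_diagonal_mem (d := fun a => raisingOp M D (N a)) hone hraising fun a =>
      raisingOp_mem_diffOpsLE hM hD (N a)⟩
  have hmem := mem_blockSpan_of_diagonal_mem (d := fun a => M * D - ((N a : ℂ) / 2) • 1) hone
    heuler fun a => mul_sub_smul_mem_diffOpsLE hM hD (SetLike.one_mem_graded _) _
  simpa using add_mem hmem
    (Submodule.smul_mem _ ((N a : ℂ) / 2) (blockSpan_mono zero_le_one hone))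

theorem ContainsGl2.isNilpotentPow_mem {N e : ℕ} {P : Module.End ℂ R2}
    (h : ContainsGl2 G a M D N) (hP : IsNilpotentPow M D N e P) : P ∈ blockSpan G a a e := by
  obtain rfl | rfl := hP
  · exact pow_mem_blockSpan h.one_mem h.lowering_mem e
  · exact pow_mem_blockSpan h.one_mem h.raising_mem e

end MatrixOperators

section Blocks

section Commute

variable {A M D : Module.End ℂ R2}

theorem IsNilpotentPow.commute {N e : ℕ} {P : Module.End ℂ R2} (hP : IsNilpotentPow M D N e P)
    (hM : Commute A M) (hD : Commute A D) : Commute A P := by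
  obtain rfl | rfl := hP
  · exact hD.pow_right e
  · exact (((hM.pow_right 2).mul_right hD).sub_right (hM.smul_right _)).pow_right e

theorem commute_qbar (hM : Commute A M) (hD : Commute A D) (N r α : ℕ) :
    Commute A (qbar M D N r α) := by
  refine (Commute.list_prod_right _ _ fun B hB => ?_).mul_right (hD.pow_right α)
  obtain ⟨t, -, rfl⟩ := List.mem_map.mp hB
  exact (hM.mul_right hD).sub_right ((Commute.one_right A).smul_right _)

end Commute

variable {G : Set (Module.End ℂ V2)} {a b : Fin 2} {N M N' M' k r r' : ℕ} {f : ℕ × ℕ → R2}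

theorem diffOp_mem_blockSpan_of_hasShiftFactorization {𝒜 ℬ : Set (Module.End ℂ R2)}
    (hax : ContainsGl2 G a (Mf Xv) Dx N') (hay : ContainsGl2 G a (Mf Yv) Dy M')
    (hbx : ContainsGl2 G b (Mf Xv) Dx N) (hby : ContainsGl2 G b (Mf Yv) Dy M)
    (h𝒜 : HasShiftFactorization (Mf Xv) Dx (fun q p => mon p q) N N' r 𝒜)
    (hℬ : HasShiftFactorization (Mf Yv) Dy mon M M' r' ℬ)
    (hcomm : ∀ A ∈ 𝒜, Commute A (Mf Yv) ∧ Commute A Dy)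
    (hmul : ∀ A ∈ 𝒜, ∀ B ∈ ℬ, A * B ∈ blockSpan G a b (r + r'))
    (hf : ∀ ij, k < ij.1 + ij.2 → f ij = 0)
    (hpres : ∀ w ∈ Rmod N M, diffOp (rectIdx N M) f w ∈ Rmod N' M') :
    diffOp (rectIdx N M) f ∈ blockSpan G a b k := by
  refine Submodule.span_le.mpr ?_ (diffOp_mem_span_of_preserves hf hpres)
  rintro _ ⟨s, t, d, hs, ht, hst, rfl⟩
  obtain ⟨e, P, A, hA, he, hP, hPA⟩ := h𝒜 s (Nat.le_of_add_right_le hs)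
  obtain ⟨e', P', B, hB, he', hP', hPB⟩ := hℬ t (Nat.le_of_add_right_le ht)
  have hcommP' : A * P' = P' * A := hP'.commute (hcomm A hA).1 (hcomm A hA).2
  have hfactor : P * A * (P' * B) = P * P' * (A * B) := by
    rw [mul_assoc, ← mul_assoc A, hcommP', mul_assoc, mul_assoc]
  rw [SetLike.mem_coe, ← mul_mul_euler_pow_eq_shiftOp hPA hPB, hfactor]
  have hEuler := mul_mem_blockSpan (pow_mem_blockSpan hbx.one_mem hbx.euler_mem (d 0))
    (pow_mem_blockSpan hby.one_mem hby.euler_mem (d 1))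
  have hnil := mul_mem_blockSpan (hax.isNilpotentPow_mem hP) (hay.isNilpotentPow_mem hP')
  have hle : e + e' + (r + r') + (d 0 + d 1) ≤ k := by lia
  exact blockSpan_mono hle (mul_mem_blockSpan (mul_mem_blockSpan hnil (hmul A hA B hB)) hEuler)

theorem diffOp_mem_blockSpan_self (hx : ContainsGl2 G a (Mf Xv) Dx N)
    (hy : ContainsGl2 G a (Mf Yv) Dy M) (hf : ∀ ij, k < ij.1 + ij.2 → f ij = 0)
    (hpres : ∀ w ∈ Rmod N M, diffOp (rectIdx N M) f w ∈ Rmod N M) :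
    diffOp (rectIdx N M) f ∈ blockSpan G a a k := by
  refine diffOp_mem_blockSpan_of_hasShiftFactorization hx hy hx hy
    (isWeylLadder_x.hasShiftFactorization_mul_pow N 0)
    (isWeylLadder_y.hasShiftFactorization_mul_pow M 0) ?_ ?_ hf hpres
  · simp
  · simpa using hx.one_mem

theorem diffOp_mem_blockSpan_of_raise_of_lower {Δ Γ : ℕ}
    (hax : ContainsGl2 G a (Mf Xv) Dx (N + Δ)) (hay : ContainsGl2 G a (Mf Yv) Dy M)
    (hbx : ContainsGl2 G b (Mf Xv) Dx N) (hby : ContainsGl2 G b (Mf Yv) Dy (M + Γ))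
    (hQ : ∀ α ≤ Δ, ∀ β ≤ Γ, Mf (Xv ^ α) * qbar (Mf Yv) Dy M Γ β ∈ blockSpan G a b Γ)
    (hf : ∀ ij, k < ij.1 + ij.2 → f ij = 0)
    (hpres : ∀ w ∈ Rmod N (M + Γ), diffOp (rectIdx N (M + Γ)) f w ∈ Rmod (N + Δ) M) :
    diffOp (rectIdx N (M + Γ)) f ∈ blockSpan G a b k := by
  refine diffOp_mem_blockSpan_of_hasShiftFactorization hax hay hbx hby
    (isWeylLadder_x.hasShiftFactorization_mul_pow N Δ)
    (isWeylLadder_y.hasShiftFactorization_qbar M Γ) ?_ ?_ hf hpres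
  · rintro _ ⟨α, -, rfl⟩
    exact ⟨(commute_Mf Xv Yv).pow_left α, commute_Dy_Mf_Xv.symm.pow_left α⟩
  · rintro _ ⟨α, hα, rfl⟩ _ ⟨β, hβ, rfl⟩
    simpa [Mf_pow] using hQ α hα β hβ

theorem diffOp_mem_blockSpan_of_lower_of_raise {Δ Γ : ℕ}
    (hax : ContainsGl2 G a (Mf Xv) Dx N) (hay : ContainsGl2 G a (Mf Yv) Dy (M + Γ))
    (hbx : ContainsGl2 G b (Mf Xv) Dx (N + Δ)) (hby : ContainsGl2 G b (Mf Yv) Dy M)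
    (hQ : ∀ α ≤ Δ, ∀ β ≤ Γ, qbar (Mf Xv) Dx N Δ α * Mf (Yv ^ β) ∈ blockSpan G a b Δ)
    (hf : ∀ ij, k < ij.1 + ij.2 → f ij = 0)
    (hpres : ∀ w ∈ Rmod (N + Δ) M, diffOp (rectIdx (N + Δ) M) f w ∈ Rmod N (M + Γ)) :
    diffOp (rectIdx (N + Δ) M) f ∈ blockSpan G a b k := by
  refine diffOp_mem_blockSpan_of_hasShiftFactorization hax hay hbx hby
    (isWeylLadder_x.hasShiftFactorization_qbar N Δ)
    (isWeylLadder_y.hasShiftFactorization_mul_pow M Γ) ?_ ?_ hf hpres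
  · rintro _ ⟨α, -, rfl⟩
    exact ⟨(commute_qbar (commute_Mf Yv Xv) commute_Dx_Mf_Yv.symm N Δ α).symm,
      (commute_qbar commute_Dy_Mf_Xv commute_Dx_Dy.symm N Δ α).symm⟩
  · rintro _ ⟨α, hα, rfl⟩ _ ⟨β, hβ, rfl⟩
    simpa [Mf_pow] using hQ α hα β hβ

end Blocks

section Generators

theorem Jxp_eq_raisingOp (a : ℕ) : Jxp a = raisingOp (Mf Xv) Dx a := by
  rw [Jxp, raisingOp, Mf_pow]

theorem Kyp_eq_raisingOp (a : ℕ) : Kyp a = raisingOp (Mf Yv) Dy a := by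
  rw [Kyp, raisingOp, Mf_pow]

variable (n m : ℕ) {Δ Γ α β : ℕ}

theorem Qgm_eq_matOpHom (α β : ℕ) : Qgm m Γ α β =
    matOpHom (.single 1 0 (Mf (Xv ^ α) * qbar (Mf Yv) Dy (m - Γ) Γ β)) := rfl

theorem Qgp_eq_matOpHom (α β : ℕ) : Qgp n Δ α β =
    matOpHom (.single 0 1 (qbar (Mf Xv) Dx (n - Δ) Δ α * Mf (Yv ^ β))) := rfl

theorem Mf_mul_qbar_mem_blockSpan_Grect (hα : α ≤ Δ) (hβ : β ≤ Γ) :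
    Mf (Xv ^ α) * qbar (Mf Yv) Dy (m - Γ) Γ β ∈ blockSpan (Grect n m Δ Γ) 1 0 Γ := by
  have hmem : Qgm m Γ α β ∈ Grect n m Δ Γ := .inl (.inl (.inr ⟨α, hα, β, hβ, rfl⟩))
  rw [Qgm_eq_matOpHom] at hmem
  exact mem_blockSpan_of_single_mem hmem <|
    Mf_mul_mem_diffOpsLE _ (qbar_mem_diffOpsLE (Mf_mem_diffOpsLE Yv) Dy_mem_diffOpsLE _ hβ)

theorem qbar_mul_Mf_mem_blockSpan_Grect (hα : α ≤ Δ) (hβ : β ≤ Γ) :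
    qbar (Mf Xv) Dx (n - Δ) Δ α * Mf (Yv ^ β) ∈ blockSpan (Grect n m Δ Γ) 0 1 Δ := by
  have hmem : Qgp n Δ α β ∈ Grect n m Δ Γ := .inl (.inr ⟨α, hα, β, hβ, rfl⟩)
  rw [Qgp_eq_matOpHom] at hmem
  have hqbar := qbar_mem_diffOpsLE (Mf_mem_diffOpsLE Xv) Dx_mem_diffOpsLE (n - Δ) hα
  exact mem_blockSpan_of_single_mem hmem <| by
    simpa using mul_mem_diffOpsLE hqbar (Mf_mem_diffOpsLE (Yv ^ β))

/- `J` separates the two components if `Δ ≠ 0`, and `K` does if `Γ ≠ 0`. If `Δ = Γ = 0`, then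
`Q⁺₀₀` and `Q⁻₀₀` are the off-diagonal matrix units. -/
theorem one_mem_blockSpan_Grect (Δ Γ : ℕ) (a : Fin 2) :
    1 ∈ blockSpan (Grect n m Δ Γ) a a 0 := by
  have hone : 1 ∈ Grect n m Δ Γ := .inr rfl
  by_cases hΔ : Δ = 0
  · by_cases hΓ : Γ = 0
    · subst hΔ hΓ
      have h10 := Mf_mul_qbar_mem_blockSpan_Grect n m (le_refl 0) (le_refl 0)
      have h01 := qbar_mul_Mf_mem_blockSpan_Grect n m (le_refl 0) (le_refl 0)
      simp only [pow_zero, Mf_one, qbar, Nat.sub_zero, List.range_zero, List.map_nil, List.prod_nil,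
        mul_one] at h10 h01
      fin_cases a
      · simpa using mul_mem_blockSpan h01 h10
      · simpa using mul_mem_blockSpan h10 h01
    · have hK : Kgen m Γ ∈ Grect n m Δ Γ := by simp [Grect]
      exact one_mem_blockSpan_of_diagonal_mem hone
        (r := ![(m : ℂ) / 2, ((m : ℂ) + Γ) / 2]) (by simpa [add_div] using hΓ) hK a
  · have hJ : Jgen n Δ ∈ Grect n m Δ Γ := by simp [Grect]
    exact one_mem_blockSpan_of_diagonal_mem hone
      (r := ![((n : ℂ) + Δ) / 2, (n : ℂ) / 2]) (by simpa [add_div] using hΔ) hJ a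

theorem containsGl2_x_Grect (Δ Γ : ℕ) (a : Fin 2) :
    ContainsGl2 (Grect n m Δ Γ) a (Mf Xv) Dx (![n - Δ, n] a) := by
  refine containsGl2_of_diagonal_mem (Mf_mem_diffOpsLE Xv) Dx_mem_diffOpsLE
    (one_mem_blockSpan_Grect n m Δ Γ a) ?_ ?_ ?_
  · simp [Grect, matOpHom_diagonal, Sgm]
  · simp [Grect, matOpHom_diagonal, Sg0, Jx0]
  · simp [Grect, matOpHom_diagonal, Sgp, Jxp_eq_raisingOp]

theorem containsGl2_y_Grect (Δ Γ : ℕ) (a : Fin 2) :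
    ContainsGl2 (Grect n m Δ Γ) a (Mf Yv) Dy (![m, m - Γ] a) := by
  refine containsGl2_of_diagonal_mem (Mf_mem_diffOpsLE Yv) Dy_mem_diffOpsLE
    (one_mem_blockSpan_Grect n m Δ Γ a) ?_ ?_ ?_
  · simp [Grect, matOpHom_diagonal, Tgm]
  · simp [Grect, matOpHom_diagonal, Tg0, Ky0]
  · simp [Grect, matOpHom_diagonal, Tgp, Kyp_eq_raisingOp]

end Generators

theorem entries_preserve_of_matOp_preserves_prod {A B C D : Module.End ℂ R2} {P Q : Submodule ℂ R2}
    (h : ∀ w ∈ P.prod Q, matOp A B C D w ∈ P.prod Q) :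
    (∀ w ∈ P, A w ∈ P) ∧ (∀ w ∈ Q, B w ∈ P) ∧ (∀ w ∈ P, C w ∈ Q) ∧ ∀ w ∈ Q, D w ∈ Q := by
  have hP (w : R2) (hw : w ∈ P) : A w ∈ P ∧ C w ∈ Q := by
    simpa [matOp] using h (w, 0) ⟨hw, zero_mem Q⟩
  have hQ (w : R2) (hw : w ∈ Q) : B w ∈ P ∧ D w ∈ Q := by
    simpa [matOp] using h (0, w) ⟨zero_mem P, hw⟩
  exact ⟨fun w hw => (hP w hw).1, fun w hw => (hQ w hw).1, fun w hw => (hP w hw).2,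
    fun w hw => (hQ w hw).2⟩

theorem stmt15 (n m Δ Γ k : ℕ) (hΔ : Δ ≤ n) (hΓ : Γ ≤ m)
    (f11 f12 f21 f22 : ℕ × ℕ → R2)
    (h11 : ∀ ij : ℕ × ℕ, k < ij.1 + ij.2 → f11 ij = 0)
    (h12 : ∀ ij : ℕ × ℕ, k < ij.1 + ij.2 → f12 ij = 0)
    (h21 : ∀ ij : ℕ × ℕ, k < ij.1 + ij.2 → f21 ij = 0)
    (h22 : ∀ ij : ℕ × ℕ, k < ij.1 + ij.2 → f22 ij = 0)
    (T : Module.End ℂ V2)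
    (hT : T = matOp (diffOp (rectIdx (n - Δ) m) f11) (diffOp (rectIdx n (m - Γ)) f12)
                    (diffOp (rectIdx (n - Δ) m) f21) (diffOp (rectIdx n (m - Γ)) f22))
    (hpres : ∀ w ∈ (Rmod (n - Δ) m).prod (Rmod n (m - Γ)),
      T w ∈ (Rmod (n - Δ) m).prod (Rmod n (m - Γ))) :
    T ∈ Submodule.span ℂ (matProdsOrd k (Grect n m Δ Γ)) := by
  subst hT
  obtain ⟨hpres11, hpres12, hpres21, hpres22⟩ := entries_preserve_of_matOp_preserves_prod hpres
  have hx := Fin.forall_fin_two.mp (containsGl2_x_Grect n m Δ Γ)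
  have hy := Fin.forall_fin_two.mp (containsGl2_y_Grect n m Δ Γ)
  have hQm (α) (hα : α ≤ Δ) (β) (hβ : β ≤ Γ) := Mf_mul_qbar_mem_blockSpan_Grect n m hα hβ
  have hQp (α) (hα : α ≤ Δ) (β) (hβ : β ≤ Γ) := qbar_mul_Mf_mem_blockSpan_Grect n m hα hβ
  obtain ⟨N, rfl⟩ := Nat.exists_eq_add_of_le' hΔ
  obtain ⟨M, rfl⟩ := Nat.exists_eq_add_of_le' hΓ
  simp only [Nat.add_sub_cancel, Matrix.cons_val_zero, Matrix.cons_val_one]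
    at hx hy hQm hQp hpres11 hpres12 hpres21 hpres22 ⊢
  refine matOpHom_mem_orderSpan_of_mem_blockSpan
    (A := !![diffOp _ f11, diffOp _ f12; diffOp _ f21, diffOp _ f22])
    (Fin.forall_fin_two.mpr ⟨Fin.forall_fin_two.mpr ⟨?_, ?_⟩, Fin.forall_fin_two.mpr ⟨?_, ?_⟩⟩)
  · exact diffOp_mem_blockSpan_self hx.1 hy.1 h11 hpres11
  · exact diffOp_mem_blockSpan_of_lower_of_raise hx.1 hy.1 hx.2 hy.2 hQp h12 hpres12
  · exact diffOp_mem_blockSpan_of_raise_of_lower hx.2 hy.2 hx.1 hy.1 hQm h21 hpres21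
  · exact diffOp_mem_blockSpan_self hx.2 hy.2 h22 hpres22
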